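/- Let n ≥ 2 and let G = ℝⁿ \ {0}, so that d_G(x) = |x|. For every c > 0, each of the three functions φᶜ(x,y) = |x−y|/(c·L(|x|,|y|)), φ̂ᶜ(x,y) = log(1 + |x−y|/(c·L(|x|,|y|))), and φ̃ᶜ(x,y) = |x−y|/(|x−y| + 2c·L(|x|,|y|)) is a metric on ℝⁿ \ {0}. -/

import Mathlib

/-- `f` is a metric on the subset `S`. -/
def IsMetricOn {E : Type*} (S : Set E) (f : E → E → ℝ) : Prop :=
  (∀ x ∈ S, ∀ y ∈ S, 0 ≤ f x y) ∧ (∀ x ∈ S, ∀ y ∈ S, (f x y = 0 ↔ x = y)) ∧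
  (∀ x ∈ S, ∀ y ∈ S, f x y = f y x) ∧
  (∀ x ∈ S, ∀ y ∈ S, ∀ z ∈ S, f x y ≤ f x z + f z y)

/-- The logarithmic mean of two positive reals. -/
noncomputable def logMean (a b : ℝ) : ℝ :=
  if a = b then a else (a - b) / (Real.log a - Real.log b)

/-!
Let `w = log |x| - log |y|` and let `k` be the distance between the directions `x / |x|` and
`y / |y|`. Dividing `|x - y|² = (|x| - |y|)² + |x| |y| k²` by `L(|x|, |y|)²` gives,
for `φ(x, y) = |x - y| / L(|x|, |y|)`, the formula
`φ(x, y)² = w² + (k / sinhc (w / 2))²` with `sinhc u = sinh u / u`.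

For fixed `k ≤ 2` this increases with `|w|`, so in the triangle inequality the intermediate point
`z` may be moved radially into the shell between `x` and `y`. There the weights `1 / sinhc` of the
pairs `(x, z)` and `(z, y)` are at least that of `(x, y)`; with all three replaced by the latter,
what remains is the triangle inequality of the Euclidean plane. Each of the three functions
is a composition of `φ` with an increasing subadditive function.
-/

open Real Set
open NormedSpace (normalize norm_smul_normalize norm_normalize_eq_one_iff)

/-- The cardinal hyperbolic sine `sinh w / w`, through which the logarithmic mean is expressed.
The integral gives it the correct value `1` at `w = 0`, and turns estimates for it into
estimates for `cosh`. -/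
noncomputable def sinhc (w : ℝ) : ℝ := ∫ t in (0 : ℝ)..1, cosh (w * t)

lemma sinhc_zero : sinhc 0 = 1 := by simp [sinhc]

lemma intervalIntegrable_cosh_mul (w a b : ℝ) :
    IntervalIntegrable (fun t => cosh (w * t)) MeasureTheory.volume a b :=
  Continuous.intervalIntegrable (by fun_prop) a b

lemma mul_sinhc (w : ℝ) : w * sinhc w = sinh w := by
  rw [sinhc, intervalIntegral.mul_integral_comp_mul_left,
    intervalIntegral.integral_eq_sub_of_hasDerivAt (fun t _ => hasDerivAt_sinh t)
      (continuous_cosh.intervalIntegrable _ _)]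
  simp

lemma sinhc_pos (w : ℝ) : 0 < sinhc w :=
  intervalIntegral.intervalIntegral_pos_of_pos (intervalIntegrable_cosh_mul w 0 1)
    (fun _ => cosh_pos _) one_pos

lemma sinhc_le_sinhc {u v : ℝ} (h : |u| ≤ |v|) : sinhc u ≤ sinhc v := by
  refine intervalIntegral.integral_mono_on zero_le_one (intervalIntegrable_cosh_mul u 0 1)
    (intervalIntegrable_cosh_mul v 0 1) fun t _ => ?_
  rw [cosh_le_cosh, abs_mul, abs_mul]
  gcongr

lemma cosh_mul_cosh_le_cosh_mul_cosh {u v t : ℝ} (h : |u| ≤ |v|) (ht : |t| ≤ 1) :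
    cosh u * cosh (v * t) ≤ cosh v * cosh (u * t) := by
  have hsq : 0 ≤ (v ^ 2 - u ^ 2) * (1 - t ^ 2) :=
    mul_nonneg (sub_nonneg.2 (sq_le_sq.2 h)) (sub_nonneg.2 ((sq_le_one_iff_abs_le_one t).2 ht))
  have hadd : cosh (u + v * t) ≤ cosh (v + u * t) :=
    cosh_le_cosh.2 (sq_le_sq.1 (by linarith))
  have hsub : cosh (u - v * t) ≤ cosh (v - u * t) :=
    cosh_le_cosh.2 (sq_le_sq.1 (by linarith))
  rw [cosh_add, cosh_add] at hadd
  rw [cosh_sub, cosh_sub] at hsub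
  linarith

lemma cosh_div_sinhc_le_cosh_div_sinhc {u v : ℝ} (h : |u| ≤ |v|) :
    cosh u / sinhc u ≤ cosh v / sinhc v := by
  rw [div_le_div_iff₀ (sinhc_pos u) (sinhc_pos v), sinhc, sinhc,
    ← intervalIntegral.integral_const_mul, ← intervalIntegral.integral_const_mul]
  refine intervalIntegral.integral_mono_on zero_le_one
    ((intervalIntegrable_cosh_mul v 0 1).const_mul _)
    ((intervalIntegrable_cosh_mul u 0 1).const_mul _) fun t ht => ?_
  exact cosh_mul_cosh_le_cosh_mul_cosh h (abs_le.2 ⟨by linarith [ht.1], ht.2⟩)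

lemma sq_add_inv_sinhc_sq (w : ℝ) : w ^ 2 + (sinhc w)⁻¹ ^ 2 = (cosh w / sinhc w) ^ 2 := by
  have hS := (sinhc_pos w).ne'
  rw [div_pow, cosh_sq, ← mul_sinhc]
  field_simp

lemma logMean_comm (a b : ℝ) : logMean a b = logMean b a := by
  rcases eq_or_ne a b with rfl | h
  · rfl
  · rw [logMean, logMean, if_neg h, if_neg h.symm, ← neg_sub b a, ← neg_sub (log b), neg_div_neg_eq]

lemma exp_sub_exp_eq_mul_sinhc (s t : ℝ) :
    exp s - exp t = (s - t) * (exp ((s + t) / 2) * sinhc ((s - t) / 2)) := by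
  have hs : exp s = exp ((s + t) / 2) * exp ((s - t) / 2) := by rw [← exp_add]; ring_nf
  have ht : exp t = exp ((s + t) / 2) * exp (-((s - t) / 2)) := by rw [← exp_add]; ring_nf
  calc exp s - exp t = 2 * exp ((s + t) / 2) * sinh ((s - t) / 2) := by
        rw [hs, ht, sinh_eq]
        ring
    _ = (s - t) * (exp ((s + t) / 2) * sinhc ((s - t) / 2)) := by
        rw [← mul_sinhc]
        ring

lemma logMean_exp (s t : ℝ) :
    logMean (exp s) (exp t) = exp ((s + t) / 2) * sinhc ((s - t) / 2) := by
  rcases eq_or_ne s t with rfl | h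
  · simp [logMean, sinhc_zero]
  · rw [logMean, if_neg (exp_injective.ne h), log_exp, log_exp, exp_sub_exp_eq_mul_sinhc,
      mul_div_cancel_left₀ _ (sub_ne_zero.2 h)]

lemma logMean_pos {a b : ℝ} (ha : 0 < a) (hb : 0 < b) : 0 < logMean a b := by
  rw [← exp_log ha, ← exp_log hb, logMean_exp]
  exact mul_pos (exp_pos _) (sinhc_pos _)

/-- The value of `|x - y| / L(|x|, |y|)` in logarithmic polar coordinates: `w` stands for
`log |x| - log |y|` and `k` for the distance between the directions of `x` and `y`. -/
noncomputable def logPolarDist (w k : ℝ) : ℝ := √(w ^ 2 + (k / sinhc (w / 2)) ^ 2)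

lemma logPolarDist_le_logPolarDist {u v k : ℝ} (h : |u| ≤ |v|) (hk : |k| ≤ 2) :
    logPolarDist u k ≤ logPolarDist v k := by
  -- `1 / sinhc` decreases with `|w|`; borrowing `(k / 2)² w²` turns it into `cosh / sinhc`,
  -- which increases.
  have hsplit (w : ℝ) : w ^ 2 + (k / sinhc (w / 2)) ^ 2 =
      (1 - (k / 2) ^ 2) * w ^ 2 + k ^ 2 * (cosh (w / 2) / sinhc (w / 2)) ^ 2 := by
    rw [← sq_add_inv_sinhc_sq]
    ring
  have hcoef : 0 ≤ 1 - (k / 2) ^ 2 := by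
    linarith [sq_le_sq.2 (hk.trans_eq (abs_of_pos (zero_lt_two' ℝ)).symm)]
  have hcoth : cosh (u / 2) / sinhc (u / 2) ≤ cosh (v / 2) / sinhc (v / 2) :=
    cosh_div_sinhc_le_cosh_div_sinhc (by rw [abs_div, abs_div]; gcongr)
  have hpos : 0 ≤ cosh (u / 2) / sinhc (u / 2) := div_nonneg (cosh_pos _).le (sinhc_pos _).le
  have hsq : u ^ 2 ≤ v ^ 2 := sq_le_sq.2 h
  rw [logPolarDist, logPolarDist, hsplit u, hsplit v]
  gcongr

lemma sqrt_add_sq_add_add_sq_le (a b c d : ℝ) :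
    √((a + b) ^ 2 + (c + d) ^ 2) ≤ √(a ^ 2 + c ^ 2) + √(b ^ 2 + d ^ 2) := by
  simpa only [Complex.norm_eq_sqrt_sq_add_sq, Complex.add_re, Complex.add_im] using
    norm_add_le (⟨a, c⟩ : ℂ) ⟨b, d⟩

lemma exists_mem_uIcc_abs_sub_le (s t r : ℝ) :
    ∃ q ∈ uIcc s t, |s - q| ≤ |s - r| ∧ |q - t| ≤ |r - t| := by
  -- The nearest point to `r` in the segment.
  refine ⟨max (min s t) (min r (max s t)), ?_⟩
  grind [uIcc]

lemma logPolarDist_sub_le_of_mem_uIcc {s t q k₁ k₂ k : ℝ} (hq : q ∈ uIcc s t) (hk₁ : 0 ≤ k₁)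
    (hk₂ : 0 ≤ k₂) (hk : 0 ≤ k) (hle : k ≤ k₁ + k₂) :
    logPolarDist (s - t) k ≤ logPolarDist (s - q) k₁ + logPolarDist (q - t) k₂ := by
  have hS₁ : sinhc ((s - q) / 2) ≤ sinhc ((s - t) / 2) := sinhc_le_sinhc <| by
    rw [abs_div, abs_div]
    gcongr ?_ / _
    exact dist_left_le_of_mem_uIcc hq
  have hS₂ : sinhc ((q - t) / 2) ≤ sinhc ((s - t) / 2) := sinhc_le_sinhc <| by
    rw [abs_div, abs_div]
    gcongr ?_ / _
    exact dist_right_le_of_mem_uIcc hq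
  have hpos := sinhc_pos ((s - t) / 2)
  have hpos₁ := sinhc_pos ((s - q) / 2)
  have hpos₂ := sinhc_pos ((q - t) / 2)
  unfold logPolarDist
  set S := sinhc ((s - t) / 2)
  calc √((s - t) ^ 2 + (k / S) ^ 2)
      ≤ √((s - t) ^ 2 + ((k₁ + k₂) / S) ^ 2) := by gcongr
    _ = √((s - q + (q - t)) ^ 2 + (k₁ / S + k₂ / S) ^ 2) := by
        rw [sub_add_sub_cancel, add_div]
    _ ≤ √((s - q) ^ 2 + (k₁ / S) ^ 2) + √((q - t) ^ 2 + (k₂ / S) ^ 2) :=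
        sqrt_add_sq_add_add_sq_le ..
    _ ≤ √((s - q) ^ 2 + (k₁ / sinhc ((s - q) / 2)) ^ 2) +
          √((q - t) ^ 2 + (k₂ / sinhc ((q - t) / 2)) ^ 2) := by gcongr

lemma logPolarDist_sub_le {s t r k₁ k₂ k : ℝ} (hk₁ : k₁ ∈ Icc 0 2) (hk₂ : k₂ ∈ Icc 0 2)
    (hk : 0 ≤ k) (hle : k ≤ k₁ + k₂) :
    logPolarDist (s - t) k ≤ logPolarDist (s - r) k₁ + logPolarDist (r - t) k₂ := by
  obtain ⟨q, hq, hsq, hqt⟩ := exists_mem_uIcc_abs_sub_le s t r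
  calc logPolarDist (s - t) k
      ≤ logPolarDist (s - q) k₁ + logPolarDist (q - t) k₂ :=
        logPolarDist_sub_le_of_mem_uIcc hq hk₁.1 hk₂.1 hk hle
    _ ≤ logPolarDist (s - r) k₁ + logPolarDist (r - t) k₂ :=
        add_le_add
          (logPolarDist_le_logPolarDist hsq ((abs_of_nonneg hk₁.1).trans_le hk₁.2))
          (logPolarDist_le_logPolarDist hqt ((abs_of_nonneg hk₂.1).trans_le hk₂.2))

lemma dist_mem_Icc_zero_two {V : Type*} [SeminormedAddCommGroup V] {p q : V} (hp : ‖p‖ ≤ 1)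
    (hq : ‖q‖ ≤ 1) : dist p q ∈ Icc 0 2 :=
  ⟨dist_nonneg, (dist_le_norm_add_norm p q).trans (by linarith)⟩

section InnerProductSpace

variable {E : Type*} [NormedAddCommGroup E] [InnerProductSpace ℝ E]

lemma norm_smul_sub_smul_sq_of_norm_eq_one {p q : E} (hp : ‖p‖ = 1) (hq : ‖q‖ = 1) (a b : ℝ) :
    ‖a • p - b • q‖ ^ 2 = (a - b) ^ 2 + a * b * ‖p - q‖ ^ 2 := by
  rw [norm_sub_sq_real, norm_sub_sq_real, norm_smul, norm_smul, real_inner_smul_left,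
    real_inner_smul_right, hp, hq, mul_one, mul_one, norm_eq_abs, norm_eq_abs, sq_abs, sq_abs]
  ring

lemma dist_exp_smul_div_logMean {p q : E} (hp : ‖p‖ = 1) (hq : ‖q‖ = 1) (s t : ℝ) :
    dist (exp s • p) (exp t • q) / logMean (exp s) (exp t) = logPolarDist (s - t) (dist p q) := by
  have hS := sinhc_pos ((s - t) / 2)
  have hexp : exp s * exp t = exp ((s + t) / 2) ^ 2 := by
    rw [← exp_add, ← exp_nat_mul]
    ring_nf
  rw [logMean_exp, logPolarDist, eq_comm, sqrt_eq_iff_eq_sq (by positivity) (by positivity),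
    div_pow, div_pow, dist_eq_norm, dist_eq_norm, norm_smul_sub_smul_sq_of_norm_eq_one hp hq,
    hexp, exp_sub_exp_eq_mul_sinhc]
  field_simp

lemma dist_div_logMean_norm {x y : E} (hx : x ≠ 0) (hy : y ≠ 0) :
    dist x y / logMean ‖x‖ ‖y‖ =
      logPolarDist (log ‖x‖ - log ‖y‖) (dist (normalize x) (normalize y)) := by
  rw [← dist_exp_smul_div_logMean (norm_normalize_eq_one_iff.2 hx) (norm_normalize_eq_one_iff.2 hy),
    exp_log (norm_pos_iff.2 hx), exp_log (norm_pos_iff.2 hy), norm_smul_normalize,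
    norm_smul_normalize]

theorem isMetricOn_dist_div_logMean_norm :
    IsMetricOn {x : E | x ≠ 0} (fun x y => dist x y / logMean ‖x‖ ‖y‖) := by
  have hpos {x y : E} (hx : x ≠ 0) (hy : y ≠ 0) : 0 < logMean ‖x‖ ‖y‖ :=
    logMean_pos (norm_pos_iff.2 hx) (norm_pos_iff.2 hy)
  have hunit {x : E} (hx : x ≠ 0) : ‖normalize x‖ ≤ 1 := (norm_normalize_eq_one_iff.2 hx).le
  refine ⟨fun x hx y hy => div_nonneg dist_nonneg (hpos hx hy).le, fun x hx y hy => ?_,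
    fun x _ y _ => congrArg₂ (· / ·) (dist_comm x y) (logMean_comm _ _),
    fun x hx y hy z hz => ?_⟩
  · rw [div_eq_zero_iff, or_iff_left (hpos hx hy).ne', dist_eq_zero]
  · simp only [dist_div_logMean_norm hx hy, dist_div_logMean_norm hx hz,
      dist_div_logMean_norm hz hy]
    exact logPolarDist_sub_le (dist_mem_Icc_zero_two (hunit hx) (hunit hz))
      (dist_mem_Icc_zero_two (hunit hz) (hunit hy)) dist_nonneg (dist_triangle ..)

end InnerProductSpace

namespace IsMetricOn

variable {E : Type*} {S : Set E} {d d' : E → E → ℝ}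

lemma congr (hd : IsMetricOn S d) (h : ∀ x ∈ S, ∀ y ∈ S, d' x y = d x y) : IsMetricOn S d' := by
  simpa +contextual only [IsMetricOn, h] using hd

lemma comp {f : ℝ → ℝ} (hd : IsMetricOn S d) (hzero : f 0 = 0) (hmono : StrictMonoOn f (Ici 0))
    (hadd : ∀ a, 0 ≤ a → ∀ b, 0 ≤ b → f (a + b) ≤ f a + f b) :
    IsMetricOn S (fun x y => f (d x y)) := by
  obtain ⟨hnonneg, heq, hsymm, htri⟩ := hd
  refine ⟨fun x hx y hy => ?_, fun x hx y hy => ?_, fun x hx y hy => ?_,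
    fun x hx y hy z hz => ?_⟩
  · rw [← hzero]
    exact hmono.monotoneOn self_mem_Ici (hnonneg x hx y hy) (hnonneg x hx y hy)
  · rw [← heq x hx y hy, ← hzero, hmono.injOn.eq_iff (hnonneg x hx y hy) self_mem_Ici, hzero]
  · exact congrArg f (hsymm x hx y hy)
  · calc f (d x y) ≤ f (d x z + d z y) :=
          hmono.monotoneOn (hnonneg x hx y hy)
            (add_nonneg (hnonneg x hx z hz) (hnonneg z hz y hy)) (htri x hx y hy z hz)
      _ ≤ f (d x z) + f (d z y) := hadd _ (hnonneg x hx z hz) _ (hnonneg z hz y hy)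

lemma div_const {c : ℝ} (hd : IsMetricOn S d) (hc : 0 < c) : IsMetricOn S (fun x y => d x y / c) :=
  hd.comp (f := (· / c)) (zero_div c) (fun _ _ _ _ hab => div_lt_div_of_pos_right hab hc)
    fun a _ b _ => (add_div a b c).le

lemma log_one_add (hd : IsMetricOn S d) : IsMetricOn S (fun x y => log (1 + d x y)) := by
  refine hd.comp (f := fun a => log (1 + a)) (by simp) (fun a ha b _ hab => ?_)
    fun a ha b hb => ?_
  · exact log_lt_log (add_pos_of_pos_of_nonneg one_pos ha) (by gcongr)
  · rw [← log_mul (by positivity) (by positivity)]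
    exact log_le_log (by positivity) (by linarith [mul_nonneg ha hb])

lemma div_add_const {c : ℝ} (hd : IsMetricOn S d) (hc : 0 < c) :
    IsMetricOn S (fun x y => d x y / (d x y + c)) := by
  refine hd.comp (f := fun a => a / (a + c)) (by simp) (fun a ha b hb hab => ?_)
    fun a ha b hb => ?_
  · rw [mem_Ici] at ha hb
    rw [div_lt_div_iff₀ (by positivity) (by positivity)]
    linarith [mul_lt_mul_of_pos_right hab hc]
  · calc (a + b) / (a + b + c) = a / (a + b + c) + b / (a + b + c) := add_div ..
      _ ≤ a / (a + c) + b / (b + c) := by gcongr <;> linarith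

end IsMetricOn

theorem stmt8_general {E : Type*} [NormedAddCommGroup E] [InnerProductSpace ℝ E] (c : ℝ)
    (hc : 0 < c) :
    IsMetricOn {x : E | x ≠ 0} (fun x y => dist x y / (c * logMean ‖x‖ ‖y‖)) ∧
    IsMetricOn {x : E | x ≠ 0} (fun x y => log (1 + dist x y / (c * logMean ‖x‖ ‖y‖))) ∧
    IsMetricOn {x : E | x ≠ 0}
      (fun x y => dist x y / (dist x y + 2 * c * logMean ‖x‖ ‖y‖)) := by
  have hmetric := isMetricOn_dist_div_logMean_norm (E := E)
  have hscaled : IsMetricOn {x : E | x ≠ 0} (fun x y => dist x y / (c * logMean ‖x‖ ‖y‖)) := by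
    simpa only [div_div, mul_comm c] using hmetric.div_const hc
  refine ⟨hscaled, hscaled.log_one_add, (hmetric.div_add_const (mul_pos two_pos hc)).congr ?_⟩
  intro x hx y hy
  have hL := logMean_pos (norm_pos_iff.2 hx) (norm_pos_iff.2 hy)
  field_simp

theorem stmt8 (n : ℕ) (hn : 2 ≤ n) (c : ℝ) (hc : 0 < c) :
    IsMetricOn {x : EuclideanSpace ℝ (Fin n) | x ≠ 0}
      (fun x y => dist x y / (c * logMean ‖x‖ ‖y‖)) ∧
    IsMetricOn {x : EuclideanSpace ℝ (Fin n) | x ≠ 0}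
      (fun x y => Real.log (1 + dist x y / (c * logMean ‖x‖ ‖y‖))) ∧
    IsMetricOn {x : EuclideanSpace ℝ (Fin n) | x ≠ 0}
      (fun x y => dist x y / (dist x y + 2 * c * logMean ‖x‖ ‖y‖)) :=
  stmt8_general c hc
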